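/- Let n ≥ 1, let S = ℂ[x_1,…,x_n], let L be the fraction field of S, and let φ_1,…,φ_n ∈ S be algebraically independent with each φ_i homogeneous of degree d_i ≥ 1. Fix ℓ ∈ {1,…,n}, let B_ℓ be the n×n matrix over S with (i,j) entry Σ_{k=1}^n adj(J_φ)_{kℓ}·∂(∂φ_i/∂x_j)/∂x_k, and set P_ℓ := B_ℓ·adj(J_φ), an n×n matrix over S. Then: (a) viewed over L, P_ℓ = det(J_φ)²·A_ℓ, where A_ℓ := (D_ℓ J_φ)·J_φ^{-1} with D_ℓ the derivation on L determined by D_ℓ(φ_i) = δ_{iℓ}; and (b) the (i,j) entry of P_ℓ is a homogeneous polynomial of degree d_i − 2 + Σ_{k≠ℓ}(d_k − 1) + Σ_{k≠j}(d_k − 1). -/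

import Mathlib

open MvPolynomial

noncomputable abbrev polyS (n : ℕ) := MvPolynomial (Fin n) ℂ
noncomputable abbrev fracL (n : ℕ) := FractionRing (polyS n)
noncomputable abbrev toL (n : ℕ) : polyS n →+* fracL n := algebraMap (polyS n) (fracL n)

/-- The Jacobian matrix of an `n`-tuple of polynomials: `(i,j)` entry `∂φ_i/∂x_j`. -/
noncomputable def jacMat {n : ℕ} (φ : Fin n → polyS n) : Matrix (Fin n) (Fin n) (polyS n) :=
  Matrix.of fun i j => MvPolynomial.pderiv j (φ i)

/-!
Let `E_ℓ = ∑ₖ adj(J)ₖ_ℓ ∂ₖ`, a polynomial vector field. The chain rule reads `J · D(x) = D(φ)`, so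
multiplying by `adj J` gives Cramer's rule `det J · D_ℓ(xₖ) = adj(J)ₖ_ℓ`. Hence `E_ℓ = det J · D_ℓ`,
so `B_ℓ = E_ℓ J = det J · D_ℓ J`, and (a) follows from `adj J = det J · J⁻¹`. For (b), `adj(J)ₖ_ℓ`
is a minor of `J` omitting row `ℓ`, and row `i` of `J` consists of forms of degree `d_i - 1`.

That `det J ≠ 0` is the Jacobian criterion: a nonzero vector in the kernel of `J` is a nonzero
derivation of `S` that kills every `φ_i`, hence kills everything algebraic over `ℂ[φ]`, which is all
of `S` because the `φ_i` form a transcendence basis.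
-/

section AlgebraicElements

variable {A B M : Type*} [CommRing A] [CommRing B] [IsDomain B] [CharZero B] [Algebra A B]
  [AddCommGroup M] [Module A M] [Module B M] [Module.IsTorsionFree B M]

theorem derivation_eq_zero_of_isAlgebraic [FaithfulSMul A B] (D : Derivation A B M)
    {b : B} (hb : IsAlgebraic A b) : D b = 0 := by
  have hinj : Function.Injective (algebraMap A B) := FaithfulSMul.algebraMap_injective A B
  have : IsDomain A := hinj.isDomain
  have : CharZero A := (algebraMap A B).charZero
  obtain ⟨p, hp, hpb⟩ := hb
  induction hdeg : p.natDegree using Nat.strong_induction_on generalizing p with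
  | _ m ih =>
  have hchain : Polynomial.aeval b p.derivative • D b = 0 := by
    rw [← D.map_aeval, hpb, map_zero]
  refine (smul_eq_zero.mp hchain).elim (fun hroot => ?_) id
  have hpos : p.natDegree ≠ 0 := fun hconst => by
    rw [Polynomial.eq_C_of_natDegree_eq_zero hconst, Polynomial.aeval_C,
      map_eq_zero_iff _ hinj] at hpb
    exact hp (by rw [Polynomial.eq_C_of_natDegree_eq_zero hconst, hpb, map_zero])
  exact ih _ (hdeg ▸ Polynomial.natDegree_derivative_lt hpos) p.derivative
    (mt Polynomial.derivative_eq_zero.mp hpos) hroot rfl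

theorem derivation_eq_zero_of_isAlgebraic_adjoin (D : Derivation A B M) {s : Set B}
    (hs : ∀ x ∈ s, D x = 0) {b : B} (hb : IsAlgebraic (Algebra.adjoin A s) b) : D b = 0 := by
  have hadjoin : ∀ x ∈ Algebra.adjoin A s, D x = 0 := fun x hx =>
    Derivation.eqOn_adjoin (D2 := 0) hs hx
  let E : Derivation (Algebra.adjoin A s) B M :=
    { toFun := D
      map_add' := map_add D
      map_smul' := fun a x => by
        simp [Algebra.smul_def, hadjoin a a.2, Subalgebra.smul_def]
      map_one_eq_zero' := D.map_one_eq_zero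
      leibniz' := D.leibniz }
  exact derivation_eq_zero_of_isAlgebraic E hb

end AlgebraicElements

section Homogeneous

variable {ι σ R : Type*} [Fintype ι] [DecidableEq ι] [CommRing R]
  {N : Matrix ι ι (MvPolynomial σ R)} {e : ι → ℕ}

theorem isHomogeneous_det (hN : ∀ i j, (N i j).IsHomogeneous (e i)) :
    N.det.IsHomogeneous (∑ i, e i) := by
  rw [← Matrix.det_transpose, Matrix.det_apply]
  refine IsHomogeneous.sum _ _ _ fun τ _ => ?_
  have hprod : (∏ i, N.transpose (τ i) i).IsHomogeneous (∑ i, e i) :=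
    IsHomogeneous.prod _ _ _ fun i _ => hN i (τ i)
  exact zsmul_mem (K := homogeneousSubmodule σ R (∑ i, e i)) hprod _

theorem isHomogeneous_adjugate (hN : ∀ i j, (N i j).IsHomogeneous (e i)) (k ℓ : ι) :
    (N.adjugate k ℓ).IsHomogeneous (∑ i ∈ Finset.univ.erase ℓ, e i) := by
  have hsum : ∑ i ∈ Finset.univ.erase ℓ, e i = ∑ i, Function.update e ℓ 0 i := by
    rw [Finset.sum_update_of_mem (Finset.mem_univ ℓ), zero_add, Finset.sdiff_singleton_eq_erase]
  rw [Matrix.adjugate_apply, hsum]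
  refine isHomogeneous_det fun i j => ?_
  rcases eq_or_ne i ℓ with rfl | hi
  · rw [Matrix.updateRow_self, Function.update_self, Pi.single_apply]
    split_ifs
    · exact isHomogeneous_one _ _
    · exact isHomogeneous_zero _ _ _
  · rw [Matrix.updateRow_ne hi, Function.update_of_ne hi]
    exact hN i j

end Homogeneous

section Jacobian

variable {ι σ R : Type*} [CommRing R]

/-- The Jacobian matrix `(∂φ_i/∂x_j)` of a family of polynomials over an arbitrary commutative
ring; `jacMat` is the square case over `ℂ`. -/
noncomputable def jacobianMatrix (φ : ι → MvPolynomial σ R) : Matrix ι σ (MvPolynomial σ R) :=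
  Matrix.of fun i j => pderiv j (φ i)

theorem isHomogeneous_jacobianMatrix {φ : ι → MvPolynomial σ R} {d : ι → ℕ}
    (hφ : ∀ i, (φ i).IsHomogeneous (d i)) (i : ι) (j : σ) :
    (jacobianMatrix φ i j).IsHomogeneous (d i - 1) :=
  (hφ i).pderiv

variable [Fintype σ]

theorem derivation_eq_sum_pderiv_smul {M : Type*} [AddCommGroup M] [Module R M]
    [Module (MvPolynomial σ R) M] [IsScalarTower R (MvPolynomial σ R) M]
    (D : Derivation R (MvPolynomial σ R) M) (p : MvPolynomial σ R) :
    D p = ∑ k, pderiv k p • D (X k) := by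
  let b := KaehlerDifferential.mvPolynomialBasis R σ
  calc D p = D.liftKaehlerDifferential (KaehlerDifferential.D R _ p) := by simp
    _ = D.liftKaehlerDifferential (∑ k, b.repr (KaehlerDifferential.D R _ p) k • b k) := by
        rw [b.sum_repr]
    _ = ∑ k, pderiv k p • D (X k) := by
        simp [b]

section ChainRule

variable {L : Type*} [CommRing L] [Algebra R L] [Algebra (MvPolynomial σ R) L]
  [IsScalarTower R (MvPolynomial σ R) L]

theorem jacobianMatrix_map_mulVec_derivation_X (φ : ι → MvPolynomial σ R)
    (D : Derivation R (MvPolynomial σ R) L) :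
    ((jacobianMatrix φ).map (algebraMap _ L)).mulVec (fun k => D (X k)) = fun i => D (φ i) := by
  ext i
  rw [derivation_eq_sum_pderiv_smul]
  simp only [Algebra.smul_def]
  rfl

end ChainRule

variable [DecidableEq σ]

theorem jacobianMatrix_det_ne_zero [IsDomain R] [CharZero R] {φ : σ → MvPolynomial σ R}
    (hφ : AlgebraicIndependent R φ) : (jacobianMatrix φ).det ≠ 0 := by
  intro hdet
  obtain ⟨v, hv, hJv⟩ := Matrix.exists_mulVec_eq_zero_iff.mpr hdet
  let E : Derivation R (MvPolynomial σ R) (MvPolynomial σ R) := mkDerivation R v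
  have hEφ : ∀ i, E (φ i) = 0 := fun i => by
    simpa [E, hJv] using (congrFun (jacobianMatrix_map_mulVec_derivation_X φ E) i).symm
  have hbasis : IsTranscendenceBasis R φ :=
    hφ.isTranscendenceBasis_of_lift_trdeg_le_of_finite (by simp)
  have halg : Algebra.IsAlgebraic (Algebra.adjoin R (Set.range φ)) (MvPolynomial σ R) :=
    hbasis.isAlgebraic
  refine hv (funext fun k => ?_)
  rw [← mkDerivation_X R v k]
  exact derivation_eq_zero_of_isAlgebraic_adjoin E (Set.forall_mem_range.mpr hEφ)
    (halg.isAlgebraic (X k))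

/-- The polynomial vector field `∑ₖ adj(J_φ)ₖ_ℓ ∂/∂xₖ`, which is `det J_φ` times the derivation
`D_ℓ` dual to `φ_ℓ`. -/
noncomputable def cramerDerivation (φ : σ → MvPolynomial σ R) (ℓ : σ) :
    Derivation R (MvPolynomial σ R) (MvPolynomial σ R) :=
  mkDerivation R fun k => (jacobianMatrix φ).adjugate k ℓ

theorem cramerDerivation_apply (φ : σ → MvPolynomial σ R) (ℓ : σ) (p : MvPolynomial σ R) :
    cramerDerivation φ ℓ p = ∑ k, (jacobianMatrix φ).adjugate k ℓ * pderiv k p := by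
  rw [derivation_eq_sum_pderiv_smul]
  simp only [cramerDerivation, mkDerivation_X, smul_eq_mul, mul_comm]

theorem isHomogeneous_cramerDerivation {φ : σ → MvPolynomial σ R} {d : σ → ℕ}
    (hφ : ∀ i, (φ i).IsHomogeneous (d i)) (ℓ : σ) {p : MvPolynomial σ R} {m : ℕ}
    (hp : p.IsHomogeneous m) :
    (cramerDerivation φ ℓ p).IsHomogeneous (m - 1 + ∑ k ∈ Finset.univ.erase ℓ, (d k - 1)) := by
  rw [cramerDerivation_apply, add_comm]
  exact IsHomogeneous.sum _ _ _ fun k _ =>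
    (isHomogeneous_adjugate (isHomogeneous_jacobianMatrix hφ) k ℓ).mul hp.pderiv

section DualDerivation

variable {L : Type*} [CommRing L] [Algebra R L] [Algebra (MvPolynomial σ R) L]
  [IsScalarTower R (MvPolynomial σ R) L] {φ : σ → MvPolynomial σ R} {ℓ : σ}
  {D : Derivation R (MvPolynomial σ R) L}

theorem algebraMap_det_mul_derivation_X (hD : ∀ i, D (φ i) = if i = ℓ then 1 else 0) (k : σ) :
    algebraMap _ L (jacobianMatrix φ).det * D (X k) =
      algebraMap _ L ((jacobianMatrix φ).adjugate k ℓ) := by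
  set J := (jacobianMatrix φ).map (algebraMap _ L)
  have hchain : J.mulVec (fun k => D (X k)) = Pi.single ℓ 1 := by
    rw [jacobianMatrix_map_mulVec_derivation_X]
    ext i
    rw [hD, Pi.single_apply]
  calc algebraMap _ L (jacobianMatrix φ).det * D (X k)
      = (J.adjugate * J).mulVec (fun k => D (X k)) k := by
        rw [Matrix.adjugate_mul, Matrix.smul_mulVec, Matrix.one_mulVec, RingHom.map_det]
        rfl
    _ = J.adjugate k ℓ := by
        rw [← Matrix.mulVec_mulVec, hchain, Matrix.mulVec_single_one]
        rfl
    _ = algebraMap _ L ((jacobianMatrix φ).adjugate k ℓ) :=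
        (congrFun₂ (RingHom.map_adjugate _ _) k ℓ).symm

theorem algebraMap_cramerDerivation (hD : ∀ i, D (φ i) = if i = ℓ then 1 else 0)
    (p : MvPolynomial σ R) :
    algebraMap _ L (cramerDerivation φ ℓ p) = algebraMap _ L (jacobianMatrix φ).det * D p := by
  rw [cramerDerivation_apply, derivation_eq_sum_pderiv_smul D, map_sum, Finset.mul_sum]
  refine Finset.sum_congr rfl fun k _ => ?_
  rw [map_mul, ← algebraMap_det_mul_derivation_X hD, Algebra.smul_def]
  ring

theorem map_cramerDerivation_mul_adjugate (hD : ∀ i, D (φ i) = if i = ℓ then 1 else 0)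
    (hdet : IsUnit (algebraMap _ L (jacobianMatrix φ).det)) :
    ((jacobianMatrix φ).map (cramerDerivation φ ℓ) * (jacobianMatrix φ).adjugate).map
        (algebraMap _ L) =
      algebraMap _ L (jacobianMatrix φ).det ^ 2 •
        ((jacobianMatrix φ).map D * ((jacobianMatrix φ).map (algebraMap _ L))⁻¹) := by
  set J := (jacobianMatrix φ).map (algebraMap _ L)
  set δ := algebraMap _ L (jacobianMatrix φ).det
  have hJdet : J.det = δ := (RingHom.map_det _ _).symm
  have hadj : (jacobianMatrix φ).adjugate.map (algebraMap _ L) = δ • J⁻¹ := by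
    rw [Matrix.inv_def, hJdet, smul_smul, Ring.mul_inverse_cancel _ hdet, one_smul]
    exact RingHom.map_adjugate _ _
  have hB : ((jacobianMatrix φ).map (cramerDerivation φ ℓ)).map (algebraMap _ L) =
      δ • (jacobianMatrix φ).map D := by
    ext i j
    exact algebraMap_cramerDerivation hD _
  rw [Matrix.map_mul, hB, hadj, Matrix.smul_mul, Matrix.mul_smul, smul_smul, sq]

end DualDerivation

-- Truncation in `d i - 2` is harmless: if `d i ≤ 1`, the second derivatives of `φ i` vanish.
theorem isHomogeneous_cramerDerivation_mul_adjugate {φ : σ → MvPolynomial σ R} {d : σ → ℕ}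
    (hφ : ∀ i, (φ i).IsHomogeneous (d i)) (ℓ i j : σ) :
    IsHomogeneous
      (((jacobianMatrix φ).map (cramerDerivation φ ℓ) * (jacobianMatrix φ).adjugate) i j)
      (d i - 2 + ∑ k ∈ Finset.univ.erase ℓ, (d k - 1) + ∑ k ∈ Finset.univ.erase j, (d k - 1)) := by
  have hJ := isHomogeneous_jacobianMatrix hφ
  rw [Matrix.mul_apply]
  exact IsHomogeneous.sum _ _ _ fun m _ =>
    (isHomogeneous_cramerDerivation hφ ℓ (hJ i m)).mul (isHomogeneous_adjugate hJ m j)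

end Jacobian

theorem stmt11_general {σ R L : Type*} [Fintype σ] [DecidableEq σ] [CommRing R] [CommRing L]
    [Algebra R L] [Algebra (MvPolynomial σ R) L] [IsScalarTower R (MvPolynomial σ R) L]
    (φ : σ → MvPolynomial σ R) (hdet : IsUnit (algebraMap _ L (jacobianMatrix φ).det))
    (d : σ → ℕ) (hhom : ∀ i, (φ i).IsHomogeneous (d i)) (ℓ : σ)
    (B : Matrix σ σ (MvPolynomial σ R))
    (hB : B = Matrix.of fun i j =>
      ∑ k, (jacobianMatrix φ).adjugate k ℓ * pderiv k (pderiv j (φ i)))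
    (D : Derivation R (MvPolynomial σ R) L) (hD : ∀ i, D (φ i) = if i = ℓ then 1 else 0) :
    (B * (jacobianMatrix φ).adjugate).map (algebraMap _ L) =
      algebraMap _ L (jacobianMatrix φ).det ^ 2 •
        ((jacobianMatrix φ).map D * ((jacobianMatrix φ).map (algebraMap _ L))⁻¹) ∧
    ∀ i j, ((B * (jacobianMatrix φ).adjugate) i j).IsHomogeneous
      (d i - 2 + ∑ k ∈ Finset.univ.erase ℓ, (d k - 1) +
        ∑ k ∈ Finset.univ.erase j, (d k - 1)) := by
  have hBE : B = (jacobianMatrix φ).map (cramerDerivation φ ℓ) := by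
    ext1 i j
    rw [hB, Matrix.map_apply, cramerDerivation_apply]
    rfl
  rw [hBE]
  exact ⟨map_cramerDerivation_mul_adjugate hD hdet,
    isHomogeneous_cramerDerivation_mul_adjugate hhom ℓ⟩

theorem stmt11 (n : ℕ) (hn : 1 ≤ n) (φ : Fin n → polyS n)
    (hφ : AlgebraicIndependent ℂ φ) (d : Fin n → ℕ)
    (hd : ∀ i, 1 ≤ d i) (hhom : ∀ i, (φ i).IsHomogeneous (d i))
    (ℓ : Fin n)
    (B : Matrix (Fin n) (Fin n) (polyS n))
    (hB : B = Matrix.of fun i j =>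
      ∑ k, (jacMat φ).adjugate k ℓ * MvPolynomial.pderiv k (MvPolynomial.pderiv j (φ i)))
    (P : Matrix (Fin n) (Fin n) (polyS n)) (hP : P = B * (jacMat φ).adjugate)
    -- `D` is the derivation on `L` determined by `D(φ_i) = δ_{i ℓ}`
    (D : Derivation ℂ (fracL n) (fracL n))
    (hD : ∀ i, D (toL n (φ i)) = if i = ℓ then 1 else 0)
    (A : Matrix (Fin n) (Fin n) (fracL n))
    (hA : A = (Matrix.of fun i j => D (((jacMat φ).map (toL n)) i j)) *
      ((jacMat φ).map (toL n))⁻¹) :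
    -- (a): viewed over `L`, `P = det(J_φ)² • A`
    P.map (toL n) = (toL n ((jacMat φ).det)) ^ 2 • A ∧
    -- (b): homogeneity of the entries of `P`
    (∀ i j, (P i j).IsHomogeneous
      (d i - 2 + ∑ k ∈ Finset.univ.erase ℓ, (d k - 1) +
        ∑ k ∈ Finset.univ.erase j, (d k - 1))) := by
  have hdet : toL n (jacMat φ).det ≠ 0 :=
    (map_ne_zero_iff _ (IsFractionRing.injective _ _)).mpr (jacobianMatrix_det_ne_zero hφ)
  subst hP hA
  exact stmt11_general φ hdet.isUnit d hhom ℓ B hB (D.compAlgebraMap (polyS n)) hD
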